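/- arXiv:1402.0299 — 3 statements merged into one kernel-verified Lean document; each statement's English description precedes it below -/
import Mathlib

section
/- The relation ⊑ is a partial order on L: it is reflexive, transitive, and antisymmetric. -/
/-- `x =_α y` : the equivalence determined by the preorder `⊑_α`. -/
def eqa {L : Type*} (sq : Ordinal → L → L → Prop) (α : Ordinal) (x y : L) : Prop :=
  sq α x y ∧ sq α y x

/-- `x ⊏_α y` : `x ⊑_α y` but not `x =_α y`. -/
def sqlt {L : Type*} (sq : Ordinal → L → L → Prop) (α : Ordinal) (x y : L) : Prop :=
  sq α x y ∧ ¬ eqa sq α x y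

/-- `x ⊑ y` : `x ⊏_α y` for some `α < κ`, or `x = y`. -/
def sqle {L : Type*} (sq : Ordinal → L → L → Prop) (κ : Ordinal) (x y : L) : Prop :=
  (∃ α < κ, sqlt sq α x y) ∨ x = y

/-- `(x]_α = {y | ∀ β < α, x =_β y}`. -/
def seg {L : Type*} (sq : Ordinal → L → L → Prop) (α : Ordinal) (x : L) : Set L :=
  {y | ∀ β < α, eqa sq β x y}

/-- `[x]_α = {y | x =_α y ∧ ∀ β < α, x =_β y}`. -/
def segcl {L : Type*} (sq : Ordinal → L → L → Prop) (α : Ordinal) (x : L) : Set L :=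
  {y | eqa sq α x y ∧ ∀ β < α, eqa sq β x y}

/-- `y = ⨆_α X` (for `X ⊆ (x]_α`): the element specified by Axiom 3. -/
def IsLubA {L : Type*} [LE L] (sq : Ordinal → L → L → Prop) (α : Ordinal) (x : L)
    (X : Set L) (y : L) : Prop :=
  y ∈ seg sq α x ∧ (∀ z ∈ X, sq α z y) ∧
    ∀ w ∈ seg sq α x, (∀ z ∈ X, sq α z w) → sq α y w ∧ y ≤ w

theorem stmt_4
    {L : Type*} [CompleteLattice L] {κ : Ordinal} (hκ : 0 < κ)
    (sq : Ordinal → L → L → Prop)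
    (hrefl : ∀ α < κ, ∀ x : L, sq α x x)
    (htrans : ∀ α < κ, ∀ x y z : L, sq α x y → sq α y z → sq α x z)
    (ax1 : ∀ α β : Ordinal, α < β → β < κ → ∀ x y : L, sq β x y → eqa sq α x y)
    (ax2 : ∀ x y : L, (∀ α < κ, eqa sq α x y) → x = y)
    (ax3 : ∀ x : L, ∀ α < κ, ∀ X ⊆ seg sq α x, ∃ y : L, IsLubA sq α x X y)
    (ax4 : ∀ X : Set L, X.Nonempty → ∀ α < κ, ∀ y : L,
      (∀ x ∈ X, eqa sq α y x) → eqa sq α y (sSup X)) :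
    (∀ x : L, sqle sq κ x x) ∧
      (∀ x y z : L, sqle sq κ x y → sqle sq κ y z → sqle sq κ x z) ∧
      (∀ x y : L, sqle sq κ x y → sqle sq κ y x → x = y) := by
  refine ⟨fun x => Or.inr rfl, ?_, ?_⟩
  · rintro x y z (⟨α, hα, h1, h2⟩ | rfl) (⟨β, hβ, h3, h4⟩ | rfl)
    · left
      rcases lt_trichotomy α β with h | h | h
      · have e := ax1 α β h hβ y z h3
        exact ⟨α, hα, htrans α hα _ _ _ h1 e.1,
          fun e' => h2 ⟨h1, htrans α hα _ _ _ e.1 e'.2⟩⟩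
      · subst h
        exact ⟨α, hα, htrans α hα _ _ _ h1 h3,
          fun e' => h2 ⟨h1, htrans α hα _ _ _ h3 e'.2⟩⟩
      · have e := ax1 β α h hα x y h1
        exact ⟨β, hβ, htrans β hβ _ _ _ e.1 h3,
          fun e' => h4 ⟨h3, htrans β hβ _ _ _ e'.2 e.1⟩⟩
    · exact Or.inl ⟨α, hα, h1, h2⟩
    · exact Or.inl ⟨β, hβ, h3, h4⟩
    · exact Or.inr rfl
  · rintro x y (⟨α, hα, h1, h2⟩ | h) (⟨β, hβ, h3, h4⟩ | h')
    · exfalso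
      rcases lt_trichotomy α β with h | h | h
      · have e := ax1 α β h hβ y x h3
        exact h2 ⟨e.2, e.1⟩
      · subst h
        exact h2 ⟨h1, h3⟩
      · have e := ax1 β α h hα x y h1
        exact h4 ⟨e.2, e.1⟩
    · exact h'.symm
    · exact h
    · exact h
end

section
/- Let α ≤ κ be an ordinal and let (x_β)_{β < α} be a sequence of elements of L such that x_β =_β x_γ and x_β ≤ x_γ whenever β < γ < α. If x = ⋁_{β < α} x_β, then x_β =_β x holds for all β < α. -/
theorem stmt_13
    {L : Type*} [CompleteLattice L] {κ : Ordinal} (hκ : 0 < κ)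
    (sq : Ordinal → L → L → Prop)
    (hrefl : ∀ α < κ, ∀ x : L, sq α x x)
    (htrans : ∀ α < κ, ∀ x y z : L, sq α x y → sq α y z → sq α x z)
    (ax1 : ∀ α β : Ordinal, α < β → β < κ → ∀ x y : L, sq β x y → eqa sq α x y)
    (ax2 : ∀ x y : L, (∀ α < κ, eqa sq α x y) → x = y)
    (ax3 : ∀ x : L, ∀ α < κ, ∀ X ⊆ seg sq α x, ∃ y : L, IsLubA sq α x X y)
    (ax4 : ∀ X : Set L, X.Nonempty → ∀ α < κ, ∀ y : L,
      (∀ x ∈ X, eqa sq α y x) → eqa sq α y (sSup X))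
    {α : Ordinal} (hα : α ≤ κ) (xs : Ordinal → L)
    (hmono : ∀ β γ : Ordinal, β < γ → γ < α → eqa sq β (xs β) (xs γ) ∧ xs β ≤ xs γ) :
    ∀ β < α, eqa sq β (xs β) (sSup (xs '' Set.Iio α)) := by
  intro β hβ
  have hset : sSup (xs '' Set.Iio α) = sSup (xs '' Set.Ico β α) := by
    apply le_antisymm
    · apply sSup_le
      rintro _ ⟨γ, hγ, rfl⟩
      rcases lt_or_ge γ β with h | h
      · exact (hmono γ β h hβ).2.trans (le_sSup ⟨β, ⟨le_rfl, hβ⟩, rfl⟩)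
      · exact le_sSup ⟨γ, ⟨h, hγ⟩, rfl⟩
    · apply sSup_le_sSup
      exact Set.image_mono (fun γ hγ => hγ.2)
  rw [hset]
  refine ax4 (xs '' Set.Ico β α) ⟨xs β, β, ⟨le_rfl, hβ⟩, rfl⟩ β (hβ.trans_le hα) _ ?_
  rintro _ ⟨γ, ⟨h1, h2⟩, rfl⟩
  rcases h1.eq_or_lt with h | h
  · subst h
    exact ⟨hrefl _ (hβ.trans_le hα) _, hrefl _ (hβ.trans_le hα) _⟩
  · exact (hmono β γ h h2).1
end

section
/- Assume additionally Axiom 5: for all x, y ∈ L and α < κ, if x ≤ y and x =_β y for all β < α, then x ⊑_α y. Then for all x, y ∈ L, x ≤ y implies x ⊑ y. -/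
theorem stmt_19
    {L : Type*} [CompleteLattice L] {κ : Ordinal} (hκ : 0 < κ)
    (sq : Ordinal → L → L → Prop)
    (hrefl : ∀ α < κ, ∀ x : L, sq α x x)
    (htrans : ∀ α < κ, ∀ x y z : L, sq α x y → sq α y z → sq α x z)
    (ax1 : ∀ α β : Ordinal, α < β → β < κ → ∀ x y : L, sq β x y → eqa sq α x y)
    (ax2 : ∀ x y : L, (∀ α < κ, eqa sq α x y) → x = y)
    (ax3 : ∀ x : L, ∀ α < κ, ∀ X ⊆ seg sq α x, ∃ y : L, IsLubA sq α x X y)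
    (ax4 : ∀ X : Set L, X.Nonempty → ∀ α < κ, ∀ y : L,
      (∀ x ∈ X, eqa sq α y x) → eqa sq α y (sSup X))
    (ax5 : ∀ α < κ, ∀ x y : L, x ≤ y → (∀ β < α, eqa sq β x y) → sq α x y) :
    ∀ x y : L, x ≤ y → sqle sq κ x y := by
  intro x y hxy
  by_cases h : ∃ α < κ, sqlt sq α x y
  · exact Or.inl h
  · refine Or.inr (ax2 x y fun α => ?_)
    induction α using WellFoundedLT.induction with
    | ind α ih =>
      intro hα
      by_contra hne
      exact h ⟨α, hα, ax5 α hα x y hxy (fun β hβ => ih β hβ (hβ.trans hα)), hne⟩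
end
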